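/- arXiv:2209.10036 — 2 statements merged into one kernel-verified Lean document; each statement's English description precedes it below -/
import Mathlib

section
/- Let f : M → X be a continuous map between topological spaces with X Hausdorff. If Bd f = ∅, then f is proper, i.e. f⁻¹(A) is compact for every compact subset A ⊆ X. -/
open Set

/-- The boundary of a map `f : M → X`: the intersection, over all compact subsets
`K ⊆ M`, of the closures in `X` of the images `f(M \ K)`. -/
def mapBd {M X : Type*} [TopologicalSpace M] [TopologicalSpace X] (f : M → X) : Set X :=
  ⋂ (K : Set M) (_ : IsCompact K), closure (f '' Kᶜ)

/-!
The boundary of `f` is the set of cluster points of `f` along the cocompact filter of `M`.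
If a compact set `A` contains no such point, then by compactness `f` avoids a whole neighbourhood
of `A` outside some compact `K`, so `f⁻¹(A)` lies in `K`; if `A` is also closed, `f⁻¹(A)`
is a closed subset of a compact set.
-/

open Filter Topology

section

variable {M X : Type*} [TopologicalSpace M] [TopologicalSpace X] {f : M → X} {A : Set X}

theorem mem_mapBd_iff_mapClusterPt {x : X} :
    x ∈ mapBd f ↔ MapClusterPt x (cocompact M) f := by
  simp only [mapBd, mem_iInter, MapClusterPt,
    (hasBasis_cocompact.map f).clusterPt_iff_forall_mem_closure]

theorem disjoint_nhdsSet_map_cocompact_iff_disjoint_mapBd (hA : IsCompact A) :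
    Disjoint (𝓝ˢ A) (map f (cocompact M)) ↔ Disjoint A (mapBd f) := by
  simp only [hA.disjoint_nhdsSet_left, Set.disjoint_left, mem_mapBd_iff_mapClusterPt,
    MapClusterPt, clusterPt_iff_not_disjoint, not_not]

theorem exists_isCompact_preimage_subset_of_disjoint_mapBd (hA : IsCompact A)
    (hbd : Disjoint A (mapBd f)) : ∃ K, IsCompact K ∧ f ⁻¹' A ⊆ K := by
  have hdisj : Disjoint (𝓟 A) (map f (cocompact M)) :=
    ((disjoint_nhdsSet_map_cocompact_iff_disjoint_mapBd hA).2 hbd).mono_left principal_le_nhdsSet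
  have hmem : Aᶜ ∈ map f (cocompact M) := Filter.disjoint_principal_left.1 hdisj
  simpa only [mem_map, preimage_compl, mem_cocompact', compl_compl] using hmem

theorem proper_of_mapBd_empty_general (hf : Continuous f) (hA : IsCompact A)
    (hA_closed : IsClosed A) (hbd : Disjoint A (mapBd f)) : IsCompact (f ⁻¹' A) := by
  obtain ⟨K, hK, hAK⟩ := exists_isCompact_preimage_subset_of_disjoint_mapBd hA hbd
  exact hK.of_isClosed_subset (hA_closed.preimage hf) hAK

end

theorem proper_of_mapBd_empty
    {M X : Type*} [TopologicalSpace M] [TopologicalSpace X] [T2Space X]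
    (f : M → X) (hf : Continuous f) (hbd : mapBd f = ∅) :
    ∀ A : Set X, IsCompact A → IsCompact (f ⁻¹' A) :=
  fun A hA ↦ proper_of_mapBd_empty_general hf hA hA.isClosed (hbd ▸ disjoint_empty A)
end

section
/- (Lemma 2.3, local finiteness part) Let R be a commutative ring, X a topological space, k, p ≥ 0, and let h be a rigid map of degree (k,p) on X. Let c be a Borel–Moore k-chain on X with coefficients in R. Then the function h(c), sending each singular p-simplex τ of X to the sum ∑_σ c(σ)·h(σ)(τ) taken over the (finitely many) singular k-simplices σ with c(σ) ≠ 0 and h(σ)(τ) ≠ 0, is a Borel–Moore p-chain on X with coefficients in R. -/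
open Set

noncomputable section

/-- The standard `k`-simplex, as a topological space. -/
abbrev Δ (k : ℕ) : Type := ↥(stdSimplex ℝ (Fin (k+1)))

/-- A singular `k`-simplex in `X`: a continuous map from the standard `k`-simplex. -/
abbrev SSimplex (X : Type*) [TopologicalSpace X] (k : ℕ) : Type _ := C(Δ k, X)

/-- A Borel–Moore (locally finite) `k`-chain on `X` with coefficients in `R`:
every point has an open neighborhood met by the images of only finitely many
simplices with nonzero coefficient. -/
def IsBMChain {X : Type*} [TopologicalSpace X] {R : Type*} [CommRing R] (k : ℕ)
    (c : SSimplex X k → R) : Prop :=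
  ∀ x : X, ∃ U : Set X, IsOpen U ∧ x ∈ U ∧
    {σ : SSimplex X k | c σ ≠ 0 ∧ (Set.range ⇑σ ∩ U).Nonempty}.Finite

/-- The support of a `k`-chain: the union of the images of the simplices with
nonzero coefficient. -/
def bmSupp {X : Type*} [TopologicalSpace X] {R : Type*} [CommRing R] (k : ℕ)
    (c : SSimplex X k → R) : Set X :=
  ⋃ (σ : SSimplex X k) (_ : c σ ≠ 0), Set.range ⇑σ

/-- A rigid map of degree `(k,p)` on `X`: each value is a Borel–Moore `p`-chain
supported inside the image of the input simplex. -/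
def IsRigid {X : Type*} [TopologicalSpace X] {R : Type*} [CommRing R] (k p : ℕ)
    (h : SSimplex X k → SSimplex X p → R) : Prop :=
  ∀ σ : SSimplex X k, IsBMChain p (h σ) ∧ bmSupp p (h σ) ⊆ Set.range ⇑σ

/-
A chain is Borel–Moore exactly when the images of the simplices it charges form a locally finite
family. Because `h σ` stays inside the image of `σ`, the simplices charged by the chains `h σ`, with
`σ` charged by `c`, refine the locally finite family of images of `c`, and are locally finite within
each member; such a doubly indexed family is locally finite. Every simplex charged by `h c` occurs
in it.
-/

open Function

theorem locallyFinite_sigma_of_subset {X ι : Type*} [TopologicalSpace X] {κ : ι → Type*}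
    {A : ι → Set X} {B : ∀ i, κ i → Set X} (hA : LocallyFinite A)
    (hB : ∀ i, LocallyFinite (B i)) (hBA : ∀ i j, B i j ⊆ A i) :
    LocallyFinite fun q : Σ i, κ i => B q.1 q.2 := by
  intro x
  obtain ⟨U, hU, hUfin⟩ := hA x
  choose V hV hVfin using fun i => hB i x
  refine ⟨U ∩ ⋂ i ∈ {i | (A i ∩ U).Nonempty}, V i,
    Filter.inter_mem hU ((Filter.biInter_mem hUfin).2 fun i _ => hV i), ?_⟩
  refine (hUfin.biUnion fun i _ => (hVfin i).image (Sigma.mk i)).subset ?_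
  rintro ⟨i, j⟩ ⟨y, hyB, hyU, hyV⟩
  have hi : (A i ∩ U).Nonempty := ⟨y, hBA i j hyB, hyU⟩
  exact mem_biUnion hi (mem_image_of_mem _ ⟨y, hyB, mem_iInter₂.1 hyV i hi⟩)

section Chains

variable {X : Type*} [TopologicalSpace X] {R : Type*} [CommRing R] {k : ℕ} {c : SSimplex X k → R}

theorem isBMChain_iff_locallyFinite :
    IsBMChain k c ↔ LocallyFinite fun σ : support c => range σ.1 := by
  have finite_iff (U : Set X) :
      {σ : SSimplex X k | c σ ≠ 0 ∧ (range σ ∩ U).Nonempty}.Finite ↔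
        {σ : support c | (range σ.1 ∩ U).Nonempty}.Finite := by
    rw [← finite_image_iff Subtype.val_injective.injOn]
    congr! 1
    ext σ
    simp [and_comm]
  constructor
  · intro hc x
    obtain ⟨U, hU, hxU, hfin⟩ := hc x
    exact ⟨U, hU.mem_nhds hxU, (finite_iff U).1 hfin⟩
  · intro hc x
    obtain ⟨U, ⟨hxU, hU⟩, hfin⟩ := hc.exists_mem_basis (nhds_basis_opens x)
    exact ⟨U, hU, hxU, (finite_iff U).2 hfin⟩

theorem range_subset_bmSupp {σ : SSimplex X k} (hσ : c σ ≠ 0) : range σ ⊆ bmSupp k c :=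
  subset_iUnion₂_of_subset σ hσ Subset.rfl

theorem IsRigid.locallyFinite_range_sigma {p : ℕ} {h : SSimplex X k → SSimplex X p → R}
    (hrig : IsRigid k p h) (hc : IsBMChain k c) :
    LocallyFinite fun q : Σ σ : support c, support (h σ) => range q.2.1 :=
  locallyFinite_sigma_of_subset (isBMChain_iff_locallyFinite.1 hc)
    (fun σ => isBMChain_iff_locallyFinite.1 (hrig σ).1)
    fun σ τ => (range_subset_bmSupp τ.2).trans (hrig σ).2

end Chains

theorem rigid_extension_isBMChain
    {X : Type*} [TopologicalSpace X] {R : Type*} [CommRing R] (k p : ℕ)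
    (h : SSimplex X k → SSimplex X p → R) (hrig : IsRigid k p h)
    (c : SSimplex X k → R) (hc : IsBMChain k c) :
    IsBMChain p (fun τ : SSimplex X p => ∑ᶠ σ : SSimplex X k, c σ * h σ τ) := by
  let extension : SSimplex X p → R := fun τ => ∑ᶠ σ : SSimplex X k, c σ * h σ τ
  -- A `finsum` with infinitely many nonzero terms is `0`, so a nonzero value always comes from a
  -- nonzero term.
  have exists_term (τ : support extension) : ∃ σ, c σ * h σ τ ≠ 0 :=
    not_forall.1 (mt finsum_eq_zero_of_forall_eq_zero τ.2)
  choose source hsource using exists_term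
  let pair (τ : support extension) : Σ σ : support c, support (h σ) :=
    ⟨⟨source τ, left_ne_zero_of_mul (hsource τ)⟩, ⟨τ, right_ne_zero_of_mul (hsource τ)⟩⟩
  have pair_injective : Injective pair :=
    Injective.of_comp (f := fun q => q.2.1) Subtype.val_injective
  exact isBMChain_iff_locallyFinite.2
    ((hrig.locallyFinite_range_sigma hc).comp_injective pair_injective)

end
end
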